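/- For a cause-respecting RPES E and trace t with last configuration Cₙ and residual E \ t having event set E^n and initial configuration C^n₀, it holds that C^n₀ = Cₙ ∩ E^n. -/

import Mathlib

/-- Data of a (labeled) reversible prime event structure (RPES) over actions `L`:
a carrier set of events, causality `lt`, conflict `conf`, labeling, a set `F` of
reversible events, reverse causality `rc` (`rc e u` means `e ≺ u̲`), prevention
`prev` (`prev e u` means `e ▷ u̲`), and an initial configuration `C0`. -/
structure RPESData (E : Type) (L : Type) where
  carrier : Set E
  lt : E → E → Prop
  conf : E → E → Prop
  label : E → L
  F : Set E
  rc : E → E → Prop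
  prev : E → E → Prop
  C0 : Set E

/-- Data of a (labeled) prime event structure (PES) with empty initial configuration. -/
structure PESData (E : Type) (L : Type) where
  carrier : Set E
  lt : E → E → Prop
  conf : E → E → Prop
  label : E → L

namespace RPESData

variable {E : Type} {L : Type}

/-- A set of events is conflict-free. -/
def ConflictFree (R : RPESData E L) (X : Set E) : Prop :=
  ∀ e ∈ X, ∀ e' ∈ X, ¬ R.conf e e'

/-- Sustained causation: `a ≪ b` iff `a < b` and, if `a` is reversible, `b ▷ a̲`. -/
def SC (R : RPESData E L) (a b : E) : Prop :=
  R.lt a b ∧ (a ∈ R.F → R.prev b a)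

/-- The axioms of a reversible prime event structure. -/
structure IsRPES (R : RPESData E L) : Prop where
  countable : R.carrier.Countable
  lt_carrier : ∀ a b, R.lt a b → a ∈ R.carrier ∧ b ∈ R.carrier
  conf_carrier : ∀ a b, R.conf a b → a ∈ R.carrier ∧ b ∈ R.carrier
  conf_irrefl : ∀ a, ¬ R.conf a a
  conf_symm : ∀ a b, R.conf a b → R.conf b a
  lt_irrefl : ∀ a, ¬ R.lt a a
  lt_trans : ∀ a b c, R.lt a b → R.lt b c → R.lt a c
  causes_finite : ∀ e, {e' | R.lt e' e}.Finite
  causes_cf : ∀ e, R.ConflictFree {e' | R.lt e' e}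
  F_carrier : R.F ⊆ R.carrier
  rc_carrier : ∀ a b, R.rc a b → a ∈ R.carrier ∧ b ∈ R.F
  rc_refl : ∀ u ∈ R.F, R.rc u u
  rcauses_finite : ∀ u ∈ R.F, {e | R.rc e u}.Finite
  rcauses_cf : ∀ u ∈ R.F, R.ConflictFree {e | R.rc e u}
  prev_carrier : ∀ a b, R.prev a b → a ∈ R.carrier ∧ b ∈ R.F
  prev_rc_disjoint : ∀ a b, ¬ (R.prev a b ∧ R.rc a b)
  sc_trans : ∀ a b c, R.SC a b → R.SC b c → R.SC a c
  conf_hered_sc : ∀ a b c, R.conf a b → R.SC b c → R.conf a c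
  C0_carrier : R.C0 ⊆ R.carrier
  C0_finite : R.C0.Finite
  C0_closed : ∀ e ∈ R.C0, ∀ e', R.lt e' e → e' ∈ R.C0
  C0_cf : R.ConflictFree R.C0

/-- A cause-respecting RPES: causality is sustained causation. -/
def CauseRespecting (R : RPESData E L) : Prop :=
  ∀ a b, R.lt a b → R.SC a b

/-- A causal RPES. -/
def Causal (R : RPESData E L) : Prop :=
  (∀ e, ∀ u ∈ R.F, (R.rc e u ↔ e = u)) ∧
  (∀ e, ∀ u ∈ R.F, (R.prev e u ↔ R.lt u e))

/-- The mixed step `A ∪ B̲` is enabled at configuration `C`. -/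
def Enabled (R : RPESData E L) (C A B : Set E) : Prop :=
  A.Finite ∧ B.Finite ∧ A ⊆ R.carrier ∧ B ⊆ R.F ∧
  A ∩ C = ∅ ∧ B ⊆ C ∧ R.ConflictFree (C ∪ A) ∧
  (∀ e ∈ A, ∀ e', R.lt e' e → e' ∈ C \ B) ∧
  (∀ e ∈ B, ∀ e', R.rc e' e → e' ∈ C \ (B \ {e})) ∧
  (∀ e ∈ B, ∀ e', R.prev e' e → e' ∉ C ∪ A)

/-- `IsTraceFrom R C t C'`: the sequence of mixed steps `t` can be executed
starting at `C`, ending in `C'`. -/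
def IsTraceFrom (R : RPESData E L) : Set E → List (Set E × Set E) → Set E → Prop
  | C, [], C' => C' = C
  | C, p :: t, C' => R.Enabled C p.1 p.2 ∧ R.IsTraceFrom ((C \ p.2) ∪ p.1) t C'

/-- `t` is a trace of `R` with `last(t) = C`. -/
def IsTraceTo (R : RPESData E L) (t : List (Set E × Set E)) (C : Set E) : Prop :=
  R.IsTraceFrom R.C0 t C

/-- `t` is a trace of `R`. -/
def IsTrace (R : RPESData E L) (t : List (Set E × Set E)) : Prop :=
  ∃ C, R.IsTraceTo t C

/-- Reachable configurations: obtained from `C0` by mixed steps. -/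
inductive ReachConf (R : RPESData E L) : Set E → Prop
  | init : ReachConf R R.C0
  | step : ∀ C A B, ReachConf R C → R.Enabled C A B → ReachConf R ((C \ B) ∪ A)

/-- Forwards reachable configurations: obtained from `C0` by forward steps only. -/
inductive FwdReachConf (R : RPESData E L) : Set E → Prop
  | init : FwdReachConf R R.C0
  | step : ∀ C A, FwdReachConf R C → R.Enabled C A ∅ → FwdReachConf R ((C \ ∅) ∪ A)

/-- The one-step removal operator: the residual of `R` after the step `A ∪ B̲`. -/
def residStep (R : RPESData E L) (A B : Set E) : RPESData E L :=
  let At : Set E := (A \ R.F) ∪ {a | a ∈ R.F ∧ ∃ x ∈ A \ R.F, R.lt a x}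
  let CA : Set E := {e | e ∈ R.carrier ∧ ∃ a ∈ At, R.conf e a}
  let E' : Set E := R.carrier \ (At ∪ CA)
  let F' : Set E := (R.F ∩ E') \
    ({e | e ∈ R.F ∧ ∃ a ∈ CA, R.rc a e} ∪ {e | e ∈ R.F ∧ ∃ a ∈ At, R.prev a e})
  { carrier := E'
    lt := fun a b => R.lt a b ∧ a ∈ E' ∧ b ∈ E'
    conf := fun a b => R.conf a b ∧ a ∈ E' ∧ b ∈ E'
    label := R.label
    F := F'
    rc := fun a b => R.rc a b ∧ a ∈ E' ∧ b ∈ F'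
    prev := fun a b => R.prev a b ∧ a ∈ E' ∧ b ∈ F'
    C0 := ((R.C0 \ B) ∪ A) ∩ E' }

/-- The residual `R \ t` of `R` after a trace `t`. -/
def resid (R : RPESData E L) (t : List (Set E × Set E)) : RPESData E L :=
  t.foldl (fun S p => S.residStep p.1 p.2) R

/-- The multiset (as a function `L → ℕ`) of action labels of the step `A ∪ B̲`. -/
noncomputable def stepLabel (R : RPESData E L) (A B : Set E) : L → ℕ :=
  fun a => Nat.card {e : E // e ∈ A ∪ B ∧ R.label e = a}

/-- Forgetting the reversibility structure. -/
def toPES (R : RPESData E L) : PESData E L :=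
  ⟨R.carrier, R.lt, R.conf, R.label⟩

end RPESData

namespace PESData

variable {E : Type} {L : Type}

/-- The axioms of a prime event structure. -/
structure IsPES (P : PESData E L) : Prop where
  countable : P.carrier.Countable
  lt_carrier : ∀ a b, P.lt a b → a ∈ P.carrier ∧ b ∈ P.carrier
  conf_carrier : ∀ a b, P.conf a b → a ∈ P.carrier ∧ b ∈ P.carrier
  lt_irrefl : ∀ a, ¬ P.lt a a
  lt_trans : ∀ a b c, P.lt a b → P.lt b c → P.lt a c
  causes_finite : ∀ e, {e' | P.lt e' e}.Finite
  conf_irrefl : ∀ a, ¬ P.conf a a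
  conf_symm : ∀ a b, P.conf a b → P.conf b a
  conf_hered : ∀ a b c, P.conf a b → P.lt b c → P.conf a c

/-- `φ(E, F)`: the RPES obtained from a PES by declaring the events in `F`
reversible, with `e ≺ e̲` for `e ∈ F` and `e ▷ e̲'` whenever `e' ∈ F`, `e' < e`. -/
def toRPES (P : PESData E L) (F : Set E) : RPESData E L :=
  { carrier := P.carrier
    lt := P.lt
    conf := P.conf
    label := P.label
    F := F
    rc := fun e u => u ∈ F ∧ e = u
    prev := fun e u => u ∈ F ∧ P.lt u e
    C0 := ∅ }

end PESData

/-- A labeled transition system. -/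
structure LTS (S : Type) (Λ : Type) where
  tr : S → Λ → S → Prop
  init : S

/-- Bisimulation between labeled transition systems. -/
def IsBisimulation {S S' Λ : Type} (T : LTS S Λ) (T' : LTS S' Λ)
    (Rl : S → S' → Prop) : Prop :=
  Rl T.init T'.init ∧
  (∀ s s', Rl s s' → ∀ M s₁, T.tr s M s₁ → ∃ s₁', T'.tr s' M s₁' ∧ Rl s₁ s₁') ∧
  (∀ s s', Rl s s' → ∀ M s₁', T'.tr s' M s₁' → ∃ s₁, T.tr s M s₁ ∧ Rl s₁ s₁')

namespace RPESData

variable {E : Type} {L : Type}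

/-- Transition relation of the configuration transition system `TC(R)`. -/
def confTr (R : RPESData E L) (C : Set E) (M : L → ℕ) (C' : Set E) : Prop :=
  R.ReachConf C ∧ ∃ A B, R.Enabled C A B ∧ C' = (C \ B) ∪ A ∧ M = R.stepLabel A B

/-- The configuration transition system `TC(R)`. -/
def TC (R : RPESData E L) : LTS (Set E) (L → ℕ) :=
  ⟨R.confTr, R.C0⟩

/-- Transition relation between residuals: `F ⇀^M F'` iff `F' = F \ (A ∪ B̲)` for
a one-step trace `A ∪ B̲` of `F` with label multiset `M`. -/
def residTr (R' : RPESData E L) (M : L → ℕ) (R'' : RPESData E L) : Prop :=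
  ∃ A B, R'.Enabled R'.C0 A B ∧ R'' = R'.residStep A B ∧ M = R'.stepLabel A B

/-- Residuals reachable from `R` via `residTr`. -/
inductive ReachRes (R : RPESData E L) : RPESData E L → Prop
  | init : ReachRes R R
  | step : ∀ R' M R'', ReachRes R R' → residTr R' M R'' → ReachRes R R''

/-- The residual transition system `TE(R)`. -/
def TE (R : RPESData E L) : LTS (RPESData E L) (L → ℕ) :=
  ⟨residTr, R⟩

end RPESData

/-! Removing the irreversible part of a step only shrinks the event set, so intersecting with the
later event set `E^i` absorbs the earlier intersections with `E^{i-1}`. Hence the identity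
`C^i₀ = Cᵢ ∩ E^i` passes from each step to the next. -/

namespace RPESData

variable {E L : Type}

/-- The set of events obtained from `C` by successively performing the mixed steps `A ∪ B̲` of `t`,
each replacing the current set `X` by `(X \ B) ∪ A`. It is defined for an arbitrary sequence of
steps; along a trace it is `last(t)`. -/
def fire (C : Set E) (t : List (Set E × Set E)) : Set E :=
  t.foldl (fun X p => (X \ p.2) ∪ p.1) C

theorem IsTraceFrom.eq_fire {R : RPESData E L} {t : List (Set E × Set E)} {C C' : Set E}
    (ht : R.IsTraceFrom C t C') : C' = fire C t := by
  induction t generalizing C with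
  | nil => exact ht
  | cons p t ih => exact ih ht.2

theorem residStep_carrier_subset (R : RPESData E L) (A B : Set E) :
    (R.residStep A B).carrier ⊆ R.carrier :=
  Set.sdiff_subset

theorem residStep_C0_eq {R : RPESData E L} {C : Set E} (hC : R.C0 = C ∩ R.carrier)
    (A B : Set E) :
    (R.residStep A B).C0 = ((C \ B) ∪ A) ∩ (R.residStep A B).carrier := by
  have hsub := R.residStep_carrier_subset A B
  calc (R.residStep A B).C0
      = (((C ∩ R.carrier) \ B) ∪ A) ∩ (R.residStep A B).carrier := by rw [← hC]; rfl
    _ = ((C \ B) ∪ A) ∩ (R.residStep A B).carrier := by grind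

end RPESData

theorem resid_C0_eq_general {E L : Type} {R : RPESData E L} {C : Set E}
    (hC : R.C0 = C ∩ R.carrier) (t : List (Set E × Set E)) :
    (R.resid t).C0 = RPESData.fire C t ∩ (R.resid t).carrier :=
  List.foldl_rel (r := fun (S : RPESData E L) X => S.C0 = X ∩ S.carrier) hC
    fun (A, B) _ _ _ hX => RPESData.residStep_C0_eq hX A B

/-- For a cause-respecting RPES and a trace `t` with last
configuration `Cₙ`, the initial configuration of the residual satisfies
`C^n₀ = Cₙ ∩ E^n`. -/
theorem resid_C0_eq {E L : Type} (R : RPESData E L) (h : R.IsRPES)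
    (hcr : R.CauseRespecting) (t : List (Set E × Set E)) (Cn : Set E)
    (ht : R.IsTraceTo t Cn) :
    (R.resid t).C0 = Cn ∩ (R.resid t).carrier := by
  rw [ht.eq_fire]
  exact resid_C0_eq_general (Set.inter_eq_left.mpr h.C0_carrier).symm t
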